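/- For every integer k ≥ 2 there exists an infinite binary k-automatic sequence whose critical exponent is at most 7/3; in particular, for each k that is a power of 2 the Thue–Morse sequence works, and its critical exponent equals 2. -/

import Mathlib

/-- A sequence `a` is `m`-automatic if some DFAO, reading the base-`m` digits of `n`
starting with the most significant digit, outputs `a n`. -/
def IsAutomatic {α : Type} (m : ℕ) (a : ℕ → α) : Prop :=
  ∃ (Q : Type) (_ : Fintype Q) (q0 : Q) (δ : Q → ℕ → Q) (out : Q → α),
    ∀ n : ℕ, a n = out (((Nat.digits m n).reverse).foldl δ q0)

/-- Critical exponent at most 7/3: no factor of exponent > 7/3, i.e. no factor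
of length `n` with a period `p` such that `3n > 7p`. -/
def CritExpLeSevenThirds (x : ℕ → Fin 2) : Prop :=
  ¬ ∃ i n p : ℕ, 1 ≤ p ∧ p ≤ n ∧ 3 * n > 7 * p ∧
      ∀ j : ℕ, j + p < n → x (i + j) = x (i + j + p)

/-- The Thue–Morse sequence, as an infinite binary word. -/
def tm (n : ℕ) : Fin 2 := if ((Nat.digits 2 n).count 1) % 2 = 1 then 1 else 0

namespace RepThr

/-! ### Automaticity -/

/-- A finite-valued state function compatible with appending base-`k` digits. -/
def Compat {Q : Type} (k : ℕ) (f : ℕ → Q) : Prop :=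
  ∀ n m d : ℕ, d < k → f n = f m → f (k * n + d) = f (k * m + d)

theorem automatic_of_compat {Q α : Type} [Finite Q] (k : ℕ) (hk : 2 ≤ k) (f : ℕ → Q)
    (hf : Compat k f) (out : Q → α) : IsAutomatic k (fun n => out (f n)) := by
  classical
  let δ : Q → ℕ → Q := fun q d => if h : ∃ n, f n = q then f (k * h.choose + d) else q
  have hδ : ∀ n d, d < k → δ (f n) d = f (k * n + d) := by
    intro n d hd
    have h : ∃ m, f m = f n := ⟨n, rfl⟩
    simp only [δ, dif_pos h]
    exact hf _ _ _ hd h.choose_spec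
  refine ⟨Q, Fintype.ofFinite Q, f 0, δ, out, ?_⟩
  intro n
  change out (f n) = _
  refine congrArg out ?_
  induction n using Nat.strong_induction_on with
  | _ n ih =>
    rcases Nat.eq_zero_or_pos n with rfl | hn
    · simp
    · rw [Nat.digits_def' (by omega) hn, List.reverse_cons, List.foldl_append]
      rw [← ih (n / k) (Nat.div_lt_self hn (by omega))]
      simp only [List.foldl_cons, List.foldl_nil]
      rw [hδ _ _ (Nat.mod_lt _ (by omega)), Nat.div_add_mod]

theorem compat_pow {Q : Type} (k : ℕ) (hk : 0 < k) (f : ℕ → Q) (hf : Compat k f) (i : ℕ) :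
    Compat (k ^ i) f := by
  induction i with
  | zero =>
    intro n m d hd h
    have : d = 0 := by simpa using hd
    subst this
    simpa using h
  | succ i ih =>
    intro n m d hd h
    have h1 := ih n m (d / k) (by
      rw [Nat.div_lt_iff_lt_mul hk]; rwa [pow_succ] at hd) h
    have h2 := hf _ _ (d % k) (Nat.mod_lt _ hk) h1
    have e : ∀ x, k ^ (i + 1) * x + d = k * (k ^ i * x + d / k) + d % k := by
      intro x
      have := Nat.div_add_mod d k
      calc k ^ (i + 1) * x + d = k ^ (i + 1) * x + (k * (d / k) + d % k) := by rw [this]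
        _ = _ := by ring
    rw [e, e]; exact h2

/-- state function for base `k` out of one for base `k ^ (j+1)` -/
def rootState {Q : Type} (k j : ℕ) (hk : 0 < k) (s : ℕ → Q) (n : ℕ) :
    Fin (j + 1) → Q × Fin (k ^ j) :=
  fun i => (s (n / k ^ (i : ℕ)), ⟨n % k ^ (i : ℕ), lt_of_lt_of_le
    (Nat.mod_lt _ (pow_pos hk _)) (Nat.pow_le_pow_right hk (by omega))⟩)

theorem compat_root {Q : Type} (k j : ℕ) (hk : 0 < k) (s : ℕ → Q)
    (hs : Compat (k ^ (j + 1)) s) : Compat k (rootState k j hk s) := by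
  intro n m d hd h
  have h1 : ∀ i, i < j + 1 → s (n / k ^ i) = s (m / k ^ i) ∧ n % k ^ i = m % k ^ i := by
    intro i hi
    have := congrFun h ⟨i, hi⟩
    simpa [rootState] using this
  have hdiv : ∀ x i, (k * x + d) / k ^ (i + 1) = x / k ^ i := by
    intro x i
    rw [pow_succ', ← Nat.div_div_eq_div_mul, Nat.mul_add_div hk, Nat.div_eq_of_lt hd, add_zero]
  have hmod : ∀ x i, (k * x + d) % k ^ (i + 1) = k * (x % k ^ i) + d := by
    intro x i
    rw [pow_succ', Nat.mod_mul, Nat.mul_add_div hk, Nat.div_eq_of_lt hd, add_zero,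
      Nat.mul_add_mod, Nat.mod_eq_of_lt hd]
    ring
  funext ⟨i, hi⟩
  have goal : s ((k * n + d) / k ^ i) = s ((k * m + d) / k ^ i) ∧
      (k * n + d) % k ^ i = (k * m + d) % k ^ i := by
    cases i with
    | succ i =>
      rw [hdiv, hdiv, hmod, hmod]
      obtain ⟨a, b⟩ := h1 i (by omega)
      exact ⟨a, by rw [b]⟩
    | zero =>
      obtain ⟨a, b⟩ := h1 j (by omega)
      refine ⟨?_, by simp [Nat.mod_one]⟩
      have e : ∀ x, k * x + d = k ^ (j + 1) * (x / k ^ j) + (k * (x % k ^ j) + d) := by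
        intro x
        rw [← hmod, ← hdiv, Nat.div_add_mod]
      have hlt : k * (n % k ^ j) + d < k ^ (j + 1) := by
        rw [← hmod]; exact Nat.mod_lt _ (pow_pos hk _)
      simp only [pow_zero, Nat.div_one]
      rw [e n, e m, ← b]
      exact hs _ _ _ hlt a
  simp only [rootState, Prod.mk.injEq, Fin.mk.injEq]
  exact goal

theorem automatic_of_compat_pow {Q α : Type} [Finite Q] (k j : ℕ) (hk : 2 ≤ k) (s : ℕ → Q)
    (hs : Compat (k ^ (j + 1)) s) (out : Q → α) : IsAutomatic k (fun n => out (s n)) := by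
  have h := automatic_of_compat k hk (rootState k j (by omega) s)
    (compat_root k j (by omega) s hs) (fun g => out (g 0).1)
  simpa [rootState] using h

/-! ### Thue–Morse -/

theorem tm_even (n : ℕ) : tm (2 * n) = tm n := by
  rcases Nat.eq_zero_or_pos n with rfl | hn
  · rfl
  · unfold tm
    rw [Nat.digits_def' (by omega) (by omega : 0 < 2 * n)]
    simp

theorem tm_odd (n : ℕ) : tm (2 * n + 1) = 1 - tm n := by
  unfold tm
  rw [Nat.digits_def' (by omega) (by omega : 0 < 2 * n + 1)]
  have h1 : (2 * n + 1) % 2 = 1 := by omega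
  have h2 : (2 * n + 1) / 2 = n := by omega
  rw [h1, h2, List.count_cons_self]
  split_ifs <;> omega

theorem fin2_flip (x y : Fin 2) : 1 - x = 1 - y ↔ x = y := by revert x y; decide

theorem tm_succ_ne (n : ℕ) (h : n % 2 = 0) : tm (n + 1) = 1 - tm n := by
  obtain ⟨m, rfl⟩ : ∃ m, n = 2 * m := ⟨n / 2, by omega⟩
  rw [tm_odd, tm_even]

theorem fin2_aux (x y : Fin 2) : y = 1 - x → x = 1 - y := by revert x y; decide

theorem tm_overlap_free : ∀ p i : ℕ, 1 ≤ p → ¬ ∀ j ≤ p, tm (i + j) = tm (i + j + p) := by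
  intro p
  induction p using Nat.strong_induction_on with
  | _ p ih =>
    intro i hp H
    rcases Nat.even_or_odd' p with ⟨q, hq | hq⟩
    · rcases Nat.even_or_odd' i with ⟨m, hm | hm⟩
      · refine ih q (by omega) m (by omega) ?_
        intro j hj
        have := H (2 * j) (by omega)
        rw [show i + 2 * j = 2 * (m + j) by omega,
          show 2 * (m + j) + p = 2 * (m + j + q) by omega, tm_even, tm_even] at this
        exact this
      · refine ih q (by omega) m (by omega) ?_
        intro j hj
        have := H (2 * j) (by omega)
        rw [show i + 2 * j = 2 * (m + j) + 1 by omega,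
          show 2 * (m + j) + 1 + p = 2 * (m + j + q) + 1 by omega, tm_odd, tm_odd,
          fin2_flip] at this
        exact this
    · have alt : ∀ j, j < p → tm (i + j + 1) = 1 - tm (i + j) := by
        intro j hj
        rcases Nat.mod_two_eq_zero_or_one (i + j) with h | h
        · exact tm_succ_ne _ h
        · have h1 := H j (by omega)
          have h2 := H (j + 1) (by omega)
          have h3 := tm_succ_ne (i + j + p) (by omega)
          rw [← add_assoc] at h2
          rw [h2, h1, ← h3]
          congr 1; omega
      have alt2 : ∀ j, 2 * j + 1 ≤ p → tm (i + (2 * j + 1)) = 1 - tm i := by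
        intro j
        induction j with
        | zero => intro h; exact alt 0 (by omega)
        | succ j ihj =>
          intro h
          have e1 := ihj (by omega)
          have e2 := alt (2 * j + 1) (by omega)
          have e3 := alt (2 * j + 2) (by omega)
          rw [show i + (2 * (j + 1) + 1) = i + (2 * j + 2) + 1 by omega, e3,
            show i + (2 * j + 2) = i + (2 * j + 1) + 1 by omega, e2, e1]
          generalize tm i = x
          revert x; decide
      have e := alt2 q (by omega)
      have e0 := H 0 (by omega)
      rw [← hq] at e
      simp only [add_zero] at e0
      rw [← e0] at e
      generalize tm i = x at e
      revert x; decide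

theorem tm_compat : Compat 2 tm := by
  intro n m d hd h
  interval_cases d
  · simp [tm_even, h]
  · simp [tm_odd, h]

/-! ### A ternary square-free word -/

/-- encoded differences of Thue–Morse -/
def tcode (x y : Fin 2) : Fin 4 := if x = y then 0 else if x = 0 then 1 else 2

def tw (n : ℕ) : Fin 4 := tcode (tm n) (tm (n + 1))

theorem tw_ne_three (n : ℕ) : tw n ≠ 3 := by
  unfold tw
  generalize tm n = x
  generalize tm (n + 1) = y
  revert x y; decide

theorem tw_zero : tw 0 = 1 := by
  have h0 : tm 0 = 0 := by simp [tm]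
  have h1 : tm 1 = 1 := by simp [tm]
  simp [tw, tcode, h0, h1]

theorem tw_no_202 (n : ℕ) : ¬ (tw n = 2 ∧ tw (n + 1) = 0 ∧ tw (n + 2) = 2) := by
  unfold tw
  generalize tm n = x
  generalize tm (n + 1) = y
  rw [show n + 1 + 1 = n + 2 from rfl, show n + 2 + 1 = n + 3 from rfl]
  generalize tm (n + 2) = z
  generalize tm (n + 3) = u
  revert x y z u; decide

theorem tcode_step (x y x' y' c : Fin 2) :
    tcode x y = tcode x' y' → x' = x + c → y' = y + c ∧ (c = 0 ∨ x = y) := by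
  revert x y x' y' c; decide

theorem tcode_sub (x y x' y' : Fin 2) (h : tcode x y = tcode x' y') :
    ((y : ℕ) : ℤ) - (x : ℕ) = ((y' : ℕ) : ℤ) - (x' : ℕ) := by
  revert x y x' y'; decide

theorem tw_square_free (i p : ℕ) (hp : 1 ≤ p) : ¬ ∀ j < p, tw (i + j) = tw (i + j + p) := by
  intro H
  let v : ℕ → ℤ := fun n => ((tm n : ℕ) : ℤ)
  have hv : ∀ n, 0 ≤ v n ∧ v n ≤ 1 := by
    intro n
    have := (tm n).isLt
    simp only [v]
    omega
  have key : ∀ j, j ≤ p → v (i + j) - v i = v (i + j + p) - v (i + p) := by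
    intro j
    induction j with
    | zero => intro _; simp
    | succ j ih =>
      intro hj
      have e1 := ih (by omega)
      have e2 := tcode_sub _ _ _ _ (H j (by omega))
      have e3 : v (i + (j + 1)) = ((tm (i + j + 1) : ℕ) : ℤ) := rfl
      have e4 : v (i + (j + 1) + p) = ((tm (i + j + p + 1) : ℕ) : ℤ) := by
        simp only [v]; rw [show i + (j + 1) + p = i + j + p + 1 by omega]
      have e5 : v (i + j) = ((tm (i + j) : ℕ) : ℤ) := rfl
      have e6 : v (i + j + p) = ((tm (i + j + p) : ℕ) : ℤ) := rfl
      omega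
  have hD : v i = v (i + p) := by
    have := key p le_rfl
    have h1 := hv i
    have h2 := hv (i + p)
    have h3 := hv (i + p + p)
    omega
  refine tm_overlap_free p i hp ?_
  intro j hj
  have := key j hj
  have h2 : v (i + j) = v (i + j + p) := by omega
  apply Fin.ext
  simp only [v] at h2
  exact_mod_cast h2

/-! ### A square-free automatic word over four letters -/

/-- code words of length 8 -/
def cw (x : Fin 4) (j : ℕ) : Fin 4 :=
  match x with
  | 0 => [2, 0, 2, 1, 0, 1, 2, 1].getD j 0
  | 1 => [2, 0, 2, 1, 0, 2, 0, 1].getD j 0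
  | 2 => [2, 0, 2, 1, 2, 0, 1, 0].getD j 0
  | 3 => [2, 0, 2, 1, 2, 0, 1, 2].getD j 0

theorem cw_prefix (x : Fin 4) : cw x 0 = 2 ∧ cw x 1 = 0 ∧ cw x 2 = 2 := by
  revert x; decide

theorem cw_ne_three (x : Fin 4) (j : ℕ) (hj : j < 8) : cw x j ≠ 3 := by
  revert x; interval_cases j <;> decide

theorem cw_square_free : ∀ x : Fin 4, ∀ i < 8, ∀ p < 5, 1 ≤ p → i + 2 * p ≤ 8 →
    ∃ j < p, cw x (i + j) ≠ cw x (i + j + p) := by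
  decide +kernel

theorem cw_star : ∀ s < 9, ∀ x y z : Fin 4, (∀ j < 8, s ≤ j → cw x j = cw y j) →
    (∀ j < s, cw y j = cw z j) → x = y ∨ y = z := by
  decide +kernel

def aw (K : ℕ) (n : ℕ) : Fin 4 :=
  if h : n % K = 0 ∨ n % K = 9 ∨ K ≤ 1 then 3
  else if n % K < 9 then cw (aw K (n / K)) (n % K - 1) else tw (n % K - 10)
termination_by n
decreasing_by
  apply Nat.div_lt_self
  · rcases Nat.eq_zero_or_pos n with rfl | h'
    · simp at h
    · exact h'
  · omega

theorem aw_three (K : ℕ) (_hK : 64 ≤ K) {n : ℕ} (h : n % K = 0 ∨ n % K = 9) : aw K n = 3 := by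
  rw [aw, dif_pos]; tauto

theorem aw_code (K : ℕ) (hK : 64 ≤ K) {n : ℕ} (h1 : 1 ≤ n % K) (h2 : n % K < 9) :
    aw K n = cw (aw K (n / K)) (n % K - 1) := by
  rw [aw, dif_neg (by omega), if_pos h2]

theorem aw_t (K : ℕ) (hK : 64 ≤ K) {n : ℕ} (h : 10 ≤ n % K) : aw K n = tw (n % K - 10) := by
  rw [aw, dif_neg (by omega), if_neg (by omega)]

theorem aw_eq_three (K : ℕ) (hK : 64 ≤ K) {n : ℕ} : aw K n = 3 ↔ (n % K = 0 ∨ n % K = 9) := by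
  constructor
  · intro h
    by_contra hc
    rcases lt_or_ge (n % K) 9 with h9 | h9
    · rw [aw_code K hK (by omega) h9] at h
      exact cw_ne_three _ _ (by omega) h
    · rw [aw_t K hK (by omega)] at h
      exact tw_ne_three _ h
  · exact aw_three K hK

theorem aw_compat (K : ℕ) (hK : 64 ≤ K) : Compat K (aw K) := by
  intro n m d hd h
  have e : ∀ x, (K * x + d) % K = d ∧ (K * x + d) / K = x := by
    intro x
    rw [Nat.mul_add_mod, Nat.mod_eq_of_lt hd, Nat.mul_add_div (by omega), Nat.div_eq_of_lt hd]
    simp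
  rw [aw.eq_def K (K * n + d), aw.eq_def K (K * m + d), (e n).1, (e n).2, (e m).1, (e m).2, h]

theorem add_mod_eq (K : ℕ) (hK : 64 ≤ K) {n j : ℕ} (h : n % K + j < K) : (n + j) % K = n % K + j ∧
    (n + j) / K = n / K := by
  have := Nat.div_add_mod n K
  have e : n + j = K * (n / K) + (n % K + j) := by omega
  rw [e, Nat.mul_add_mod, Nat.mod_eq_of_lt h, Nat.mul_add_div (by omega), Nat.div_eq_of_lt h]
  simp

/-- wrap-around version -/
theorem add_mod_eq' (K : ℕ) (_hK : 64 ≤ K) {n j : ℕ} (h : K ≤ n % K + j) (h' : n % K + j < 2 * K) :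
    (n + j) % K = n % K + j - K := by
  have := Nat.div_add_mod n K
  have e : n + j = K * (n / K + 1) + (n % K + j - K) := by
    rw [mul_add]; omega
  rw [e, Nat.mul_add_mod, Nat.mod_eq_of_lt (by omega)]


theorem exists_res (K : ℕ) (hK : 64 ≤ K) (i r : ℕ) (hr : r < K) :
    ∃ j < K, (i + j) % K = r := by
  have hi : i % K < K := Nat.mod_lt _ (by omega)
  rcases le_or_gt (i % K) r with h | h
  · refine ⟨r - i % K, by omega, ?_⟩
    rw [(add_mod_eq K hK (by omega)).1]; omega
  · refine ⟨K + r - i % K, by omega, ?_⟩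
    rw [add_mod_eq' K hK (by omega) (by omega)]; omega

theorem add_mod_cases (K : ℕ) (hK : 64 ≤ K) (n p : ℕ) :
    (n % K + p % K < K ∧ (n + p) % K = n % K + p % K) ∨
    (K ≤ n % K + p % K ∧ (n + p) % K + K = n % K + p % K) := by
  have hn : n % K < K := Nat.mod_lt _ (by omega)
  have hp : p % K < K := Nat.mod_lt _ (by omega)
  have e : (n + p) % K = (n + p % K) % K := by simp
  rcases lt_or_ge (n % K + p % K) K with h | h
  · left; rw [e, (add_mod_eq K hK h).1]; exact ⟨h, rfl⟩
  · right; rw [e, add_mod_eq' K hK h (by omega)]; omega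

theorem aw_block (K : ℕ) (hK : 64 ≤ K) (c x : ℕ) (hx : x < 8) :
    aw K (K * c + (1 + x)) = cw (aw K c) x := by
  have h1 : (K * c + (1 + x)) % K = 1 + x := by
    rw [Nat.mul_add_mod, Nat.mod_eq_of_lt (by omega)]
  have h2 : (K * c + (1 + x)) / K = c := by
    rw [Nat.mul_add_div (by omega), Nat.div_eq_of_lt (by omega), add_zero]
  rw [aw_code K hK (by omega) (by omega), h1, h2]
  congr 1; omega

theorem aw_square_aligned (K : ℕ) (hK : 64 ≤ K) (i m : ℕ) (hm : 1 ≤ m)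
    (H : ∀ j < K * m, aw K (i + j) = aw K (i + j + K * m)) :
    ∃ q, ∀ j < m, aw K (q + j) = aw K (q + j + m) := by
  have hKm : K ≤ K * m := Nat.le_mul_of_pos_right K hm
  have pos : ∀ c x, x < 8 → i ≤ K * c + (1 + x) → K * c + (1 + x) < i + K * m →
      cw (aw K c) x = cw (aw K (c + m)) x := by
    intro c x hx h1 h2
    have := H (K * c + (1 + x) - i) (by omega)
    rw [show i + (K * c + (1 + x) - i) = K * c + (1 + x) by omega,
      show K * c + (1 + x) + K * m = K * (c + m) + (1 + x) by ring,
      aw_block K hK _ _ hx, aw_block K hK _ _ hx] at this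
    exact this
  have all : ∀ c, i ≤ K * c + 1 → K * c + 8 < i + K * m → aw K c = aw K (c + m) := by
    intro c h1 h2
    have := cw_star 0 (by omega) (aw K c) (aw K (c + m)) (aw K c)
      (fun j hj _ => pos c j hj (by omega) (by omega)) (fun j hj => by omega)
    rcases this with h | h
    · exact h
    · exact h.symm
  have hi := Nat.div_add_mod i K
  have hs : i % K < K := Nat.mod_lt _ (by omega)
  generalize hq : i / K = q at hi
  generalize hsd : i % K = s at hi hs
  have mulj : ∀ j, j < m → K * j + K ≤ K * m := by
    intro j hj
    have := Nat.mul_le_mul_left K (show j + 1 ≤ m from hj)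
    rw [mul_add] at this; omega
  rcases le_or_gt s 1 with h1 | h1
  · refine ⟨q, fun j hj => all _ ?_ ?_⟩
    · rw [mul_add]; omega
    · have := mulj j hj
      rw [mul_add]; omega
  rcases le_or_gt 9 s with h9 | h9
  · refine ⟨q + 1, fun j hj => all _ ?_ ?_⟩
    · rw [mul_add, mul_add]; omega
    · have := mulj j hj
      rw [mul_add, mul_add]; omega
  have mid : ∀ j, 1 ≤ j → j < m → aw K (q + j) = aw K (q + j + m) := by
    intro j hj1 hj
    apply all
    · have := Nat.mul_le_mul_left K hj1
      rw [mul_add]; omega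
    · have := mulj j hj
      rw [mul_add]; omega
  have st := cw_star (s - 1) (by omega) (aw K q) (aw K (q + m)) (aw K (q + m + m))
    (fun j hj hj2 => pos q j hj (by omega) (by omega))
    (fun j hj => pos (q + m) j (by omega) (by rw [mul_add]; omega) (by rw [mul_add]; omega))
  rcases st with h | h
  · refine ⟨q, fun j hj => ?_⟩
    rcases Nat.eq_zero_or_pos j with rfl | hj0
    · exact h
    · exact mid j hj0 hj
  · refine ⟨q + 1, fun j hj => ?_⟩
    rw [show q + 1 + j = q + (j + 1) by omega]
    rcases Nat.lt_or_ge (j + 1) m with hj2 | hj2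
    · exact mid (j + 1) (by omega) hj2
    · rw [show j + 1 = m by omega]; exact h

theorem aw_square_free (K : ℕ) (hK : 64 ≤ K) : ∀ p i : ℕ, 1 ≤ p →
    ¬ ∀ j < p, aw K (i + j) = aw K (i + j + p) := by
  intro p
  induction p using Nat.strong_induction_on with
  | _ p ih =>
  intro i hp H
  by_cases hd : K ∣ p
  · obtain ⟨m, rfl⟩ := hd
    have hm : 1 ≤ m := by
      rcases Nat.eq_zero_or_pos m with rfl | h
      · simp at hp
      · exact h
    obtain ⟨q, hq⟩ := aw_square_aligned K hK i m hm H
    have : 2 * m ≤ K * m := Nat.mul_le_mul_right m (by omega)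
    exact ih m (by omega) q hm hq
  have hpmod : p % K ≠ 0 := fun h => hd (Nat.dvd_of_mod_eq_zero h)
  have hplt : p % K < K := Nat.mod_lt _ (by omega)
  have E3 : ∀ j < p, ((i + j) % K = 0 ∨ (i + j) % K = 9) →
      ((i + j + p) % K = 0 ∨ (i + j + p) % K = 9) := by
    intro j hj h
    rw [← aw_eq_three K hK, ← H j hj, aw_eq_three K hK]
    exact h
  by_cases hpK : K ≤ p
  · obtain ⟨j, hj, h0⟩ := exists_res K hK i 0 (by omega)
    obtain ⟨j', hj', h9⟩ := exists_res K hK i 9 (by omega)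
    have a1 := E3 j (by omega) (Or.inl h0)
    have a2 := E3 j' (by omega) (Or.inr h9)
    have b1 := add_mod_cases K hK (i + j) p
    have b2 := add_mod_cases K hK (i + j') p
    omega
  have hpp : p % K = p := Nat.mod_eq_of_lt (by omega)
  have hilt : i % K < K := Nat.mod_lt _ (by omega)
  by_cases h3 : ∃ j < p, aw K (i + j) = 3
  · obtain ⟨j, hj, hj3⟩ := h3
    rw [aw_eq_three K hK] at hj3
    have a1 := E3 j hj hj3
    have b1 := add_mod_cases K hK (i + j) p
    rcases hj3 with h0 | h9
    · have hp9 : p = 9 := by omega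
      subst hp9
      have m1 : ∀ x, x < 8 → aw K (i + j + (1 + x)) = cw (aw K ((i + j) / K)) x := by
        intro x hx
        obtain ⟨e1, e2⟩ := add_mod_eq K hK (n := i + j) (j := 1 + x) (by omega)
        rw [aw_code K hK (by omega) (by omega), e1, e2]
        congr 1; omega
      obtain ⟨c0, c1, c2⟩ := cw_prefix (aw K ((i + j) / K))
      rcases Nat.lt_or_ge j 8 with hj8 | hj8
      · have e := H (j + 1) (by omega)
        have e1 := m1 0 (by omega)
        rw [c0] at e1
        have f1 := (add_mod_eq K hK (n := i + j) (j := 10) (by omega)).1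
        have f2 : aw K (i + j + 10) = 1 := by
          rw [aw_t K hK (by omega), f1, h0]
          exact tw_zero
        rw [show i + (j + 1) = i + j + (1 + 0) by omega,
          show i + j + (1 + 0) + 9 = i + j + 10 by omega, e1, f2] at e
        exact absurd e (by decide)
      · have hj' : j = 8 := by omega
        subst hj'
        have g := add_mod_cases K hK i 8
        rw [Nat.mod_eq_of_lt (show 8 < K by omega)] at g
        have gi : i % K = K - 8 := by omega
        have tt : ∀ x, x < 3 → tw (K - 18 + x) = cw (aw K ((i + 8) / K)) x := by
          intro x hx
          have f1 := (add_mod_eq K hK (n := i) (j := x) (by omega)).1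
          rw [← m1 x (by omega), show i + 8 + (1 + x) = i + x + 9 by omega, ← H x (by omega),
            aw_t K hK (by omega), f1]
          congr 1; omega
        exact tw_no_202 (K - 18) ⟨(tt 0 (by omega)).trans c0, (tt 1 (by omega)).trans c1,
          (tt 2 (by omega)).trans c2⟩
    · have hpv : p = K - 9 := by omega
      have hj9 : j < 9 := by
        by_contra hc
        have g := add_mod_cases K hK (i + (j - 9)) 9
        rw [show i + (j - 9) + 9 = i + j by omega,
          Nat.mod_eq_of_lt (show 9 < K by omega)] at g
        have g2 : (i + (j - 9)) % K < K := Nat.mod_lt _ (by omega)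
        have g0 : (i + (j - 9)) % K = 0 := by omega
        have a2 := E3 (j - 9) (by omega) (Or.inl g0)
        have b2 := add_mod_cases K hK (i + (j - 9)) p
        omega
      have f1 := (add_mod_eq K hK (n := i + j) (j := 9) (by omega)).1
      have e := H (j + 9) (by omega)
      rw [show i + (j + 9) + p = i + j + K by omega, ← add_assoc] at e
      have f2 : aw K (i + j + K) = 3 := by
        rw [aw_eq_three K hK, Nat.add_mod_right]; exact Or.inr h9
      rw [f2, aw_eq_three K hK] at e
      omega
  · have N1 : ∀ j < p, aw K (i + j) ≠ 3 := fun j hj h => h3 ⟨j, hj, h⟩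
    have N : ∀ j < 2 * p, (i + j) % K ≠ 0 ∧ (i + j) % K ≠ 9 := by
      intro j hj
      have : aw K (i + j) ≠ 3 := by
        rcases Nat.lt_or_ge j p with h | h
        · exact N1 j h
        · have := H (j - p) (by omega)
          rw [show i + (j - p) + p = i + j by omega] at this
          rw [← this]
          exact N1 _ (by omega)
      rw [Ne, aw_eq_three K hK] at this
      tauto
    have n0 := N 0 (by omega)
    rw [add_zero] at n0
    have n1 : i % K + 2 * p ≤ K := by
      by_contra hc
      have := N (K - i % K) (by omega)
      rw [add_mod_eq' K hK (by omega) (by omega)] at this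
      omega
    rcases Nat.lt_or_ge (i % K) 9 with h9 | h9
    · have n2 : i % K + 2 * p ≤ 9 := by
        by_contra hc
        have := N (9 - i % K) (by omega)
        rw [(add_mod_eq K hK (by omega)).1] at this
        omega
      obtain ⟨j, hj, hne⟩ := cw_square_free (aw K (i / K)) (i % K - 1) (by omega) p (by omega) hp
        (by omega)
      apply hne
      have e := H j hj
      rw [add_assoc] at e
      obtain ⟨u1, u2⟩ := add_mod_eq K hK (n := i) (j := j) (by omega)
      obtain ⟨v1, v2⟩ := add_mod_eq K hK (n := i) (j := j + p) (by omega)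
      rw [aw_code K hK (n := i + j) (by omega) (by omega),
        aw_code K hK (n := i + (j + p)) (by omega) (by omega), u1, u2, v1, v2] at e
      rw [show i % K - 1 + j = i % K + j - 1 by omega,
        show i % K + j - 1 + p = i % K + (j + p) - 1 by omega]
      exact e
    · apply tw_square_free (i % K - 10) p hp
      intro j hj
      have e := H j hj
      rw [add_assoc] at e
      have u1 := (add_mod_eq K hK (n := i) (j := j) (by omega)).1
      have v1 := (add_mod_eq K hK (n := i) (j := j + p) (by omega)).1
      rw [aw_t K hK (by omega), aw_t K hK (by omega), u1, v1] at e
      rw [show i % K - 10 + j = i % K + j - 10 by omega,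
        show i % K + j - 10 + p = i % K + (j + p) - 10 by omega]
      exact e

/-! ### The binary image -/

/-- A 21-uniform morphism (bits of the images, first letter = least significant bit). -/
def hb (x : Fin 4) : ℕ :=
  match x with
  | 0 => 1231254
  | 1 => 864873
  | 2 => 865897
  | 3 => 1232278

def hb3 (x y z : Fin 4) : ℕ := hb x + 2 ^ 21 * hb y + 2 ^ 42 * hb z

theorem hb3_testBit : ∀ x y z : Fin 4, ∀ t < 63, (hb3 x y z).testBit t =
    if t < 21 then (hb x).testBit t else if t < 42 then (hb y).testBit (t - 21)
    else (hb z).testBit (t - 42) := by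
  decide +kernel

theorem hb_small : ∀ x y z : Fin 4, x ≠ y → y ≠ z → ∀ o < 21, ∀ p < 14, 1 ≤ p →
    ((hb3 x y z >>> o) % 2 ^ (4 * p / 3 + 1) ≠ (hb3 x y z >>> (o + p)) % 2 ^ (4 * p / 3 + 1)) := by
  decide +kernel

theorem hb_sync : ∀ x y : Fin 4, x ≠ y → ∀ x' y' : Fin 4, x' ≠ y' → ∀ o < 21, ∀ o' < 21,
    (hb3 x y 0 >>> o) % 2 ^ 19 = (hb3 x' y' 0 >>> o') % 2 ^ 19 → o = o' := by
  decide +kernel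

theorem hb_pair : ∀ x y : Fin 4, (hb x).testBit 9 = (hb y).testBit 9 →
    (hb x).testBit 10 = (hb y).testBit 10 → x = y := by
  decide +kernel

/-- bits of the image of `a` -/
def bit (a : ℕ → Fin 4) (n : ℕ) : Bool := (hb (a (n / 21))).testBit (n % 21)

theorem bit_eq (a : ℕ → Fin 4) (n j : ℕ) (h : n % 21 + j < 63) :
    bit a (n + j) =
      (hb3 (a (n / 21)) (a (n / 21 + 1)) (a (n / 21 + 2))).testBit (n % 21 + j) := by
  rw [hb3_testBit _ _ _ _ h, bit]
  split_ifs with h1 h2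
  · rw [show (n + j) / 21 = n / 21 by omega, show (n + j) % 21 = n % 21 + j by omega]
  · rw [show (n + j) / 21 = n / 21 + 1 by omega, show (n + j) % 21 = n % 21 + j - 21 by omega]
  · rw [show (n + j) / 21 = n / 21 + 2 by omega, show (n + j) % 21 = n % 21 + j - 42 by omega]

theorem bit_eq2 (a : ℕ → Fin 4) (n j : ℕ) (h : n % 21 + j < 42) :
    bit a (n + j) = (hb3 (a (n / 21)) (a (n / 21 + 1)) 0).testBit (n % 21 + j) := by
  rw [bit_eq a n j (by omega), hb3_testBit _ _ _ _ (by omega), hb3_testBit _ _ _ _ (by omega)]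
  simp [h]

theorem bit_free (a : ℕ → Fin 4)
    (ha : ∀ p i : ℕ, 1 ≤ p → ¬ ∀ j < p, a (i + j) = a (i + j + p))
    (i p : ℕ) (hp : 1 ≤ p) (H : ∀ j, 3 * j ≤ 4 * p → bit a (i + j) = bit a (i + j + p)) :
    False := by
  have hne : ∀ q, a q ≠ a (q + 1) := by
    intro q h
    refine ha 1 q le_rfl ?_
    intro j hj
    have : j = 0 := by omega
    subst this
    exact h
  rcases Nat.lt_or_ge p 14 with h14 | h14
  · refine hb_small (a (i / 21)) (a (i / 21 + 1)) (a (i / 21 + 2)) (hne _) (hne _) (i % 21)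
      (by omega) p h14 hp ?_
    apply Nat.eq_of_testBit_eq
    intro j
    simp only [Nat.testBit_mod_two_pow, Nat.testBit_shiftRight]
    by_cases hj : j < 4 * p / 3 + 1
    · have e := H j (by omega)
      rw [add_assoc, bit_eq a i j (by omega), bit_eq a i (j + p) (by omega)] at e
      rw [e, show i % 21 + (j + p) = i % 21 + p + j by omega]
    · simp [hj]
  · have hmod : i % 21 = (i + p) % 21 := by
      refine hb_sync (a (i / 21)) (a (i / 21 + 1)) (hne _) (a ((i + p) / 21))
        (a ((i + p) / 21 + 1)) (hne _) (i % 21) (by omega) ((i + p) % 21) (by omega) ?_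
      apply Nat.eq_of_testBit_eq
      intro j
      simp only [Nat.testBit_mod_two_pow, Nat.testBit_shiftRight]
      by_cases hj : j < 19
      · have e := H j (by omega)
        rw [show i + j + p = i + p + j by omega, bit_eq2 a i j (by omega),
          bit_eq2 a (i + p) j (by omega)] at e
        rw [e]
      · simp [hj]
    obtain ⟨m, hm⟩ : ∃ m, p = 21 * m := ⟨p / 21, by omega⟩
    refine ha m ((i + 11) / 21) (by omega) ?_
    intro j hj
    have key : ∀ r, r = 9 ∨ r = 10 → (hb (a ((i + 11) / 21 + j))).testBit r =
        (hb (a ((i + 11) / 21 + j + m))).testBit r := by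
      intro r hr
      have e := H (21 * ((i + 11) / 21 + j) + r - i) (by omega)
      rw [show i + (21 * ((i + 11) / 21 + j) + r - i) = 21 * ((i + 11) / 21 + j) + r by omega,
        bit, bit] at e
      rw [show (21 * ((i + 11) / 21 + j) + r) / 21 = (i + 11) / 21 + j by omega,
        show (21 * ((i + 11) / 21 + j) + r) % 21 = r by omega,
        show (21 * ((i + 11) / 21 + j) + r + p) / 21 = (i + 11) / 21 + j + m by omega,
        show (21 * ((i + 11) / 21 + j) + r + p) % 21 = r by omega] at e
      exact e
    exact hb_pair _ _ (key 9 (Or.inl rfl)) (key 10 (Or.inr rfl))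

/-- state function of the image -/
def bst (K n : ℕ) : Fin 4 × Fin 21 := (aw K (n / 21), ⟨n % 21, Nat.mod_lt _ (by omega)⟩)

theorem bst_compat (K : ℕ) (hK : 64 ≤ K) : Compat K (bst K) := by
  intro n m d hd h
  simp only [bst, Prod.mk.injEq, Fin.mk.injEq] at h ⊢
  obtain ⟨h1, h2⟩ := h
  have hr : n % 21 ≤ 20 := by omega
  have hb : K * (n % 21) ≤ K * 20 := Nat.mul_le_mul_left K hr
  have hlt : (K * (n % 21) + d) / 21 < K := by
    rw [Nat.div_lt_iff_lt_mul (by omega)]; omega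
  have e : ∀ x, K * x + d = 21 * (K * (x / 21)) + (K * (x % 21) + d) := by
    intro x
    calc K * x + d = K * (21 * (x / 21) + x % 21) + d := by rw [Nat.div_add_mod]
      _ = _ := by ring
  have en := e n
  have em := e m
  rw [← h2] at em
  have c := aw_compat K hK _ _ _ hlt h1
  constructor
  · rw [show (K * n + d) / 21 = K * (n / 21) + (K * (n % 21) + d) / 21 by omega,
      show (K * m + d) / 21 = K * (m / 21) + (K * (n % 21) + d) / 21 by omega]
    exact c
  · omega

theorem exists_word (k : ℕ) (hk : 2 ≤ k) :
    ∃ a : ℕ → Fin 2, IsAutomatic k a ∧ CritExpLeSevenThirds a := by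
  have hK : 64 ≤ k ^ (5 + 1) := by
    calc 64 = 2 ^ 6 := by norm_num
      _ ≤ k ^ 6 := Nat.pow_le_pow_left hk 6
  let out : Fin 4 × Fin 21 → Fin 2 := fun s => if (hb s.1).testBit s.2 then 1 else 0
  refine ⟨fun n => out (bst (k ^ (5 + 1)) n),
    automatic_of_compat_pow k 5 hk _ (bst_compat _ hK) out, ?_⟩
  rintro ⟨i, n, p, hp, hpn, h73, H⟩
  refine bit_free (aw (k ^ (5 + 1))) (aw_square_free _ hK) i p hp ?_
  intro j hj
  have e := H j (by omega)
  have o : ∀ x, out (bst (k ^ (5 + 1)) x) = if bit (aw (k ^ (5 + 1))) x then 1 else 0 := by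
    intro x; rfl
  simp only [o] at e
  revert e
  cases bit (aw (k ^ (5 + 1))) (i + j) <;> cases bit (aw (k ^ (5 + 1))) (i + j + p) <;> simp

end RepThr

/-- For every k ≥ 2 there is a binary k-automatic sequence of critical exponent
at most 7/3; and if k is a power of 2, the Thue–Morse sequence works: it is
k-automatic and has critical exponent exactly 2 (it contains a square but no
factor of exponent greater than 2). -/
theorem repetition_threshold_automatic (k : ℕ) (hk : 2 ≤ k) :
    (∃ a : ℕ → Fin 2, IsAutomatic k a ∧ CritExpLeSevenThirds a) ∧
    ((∃ i : ℕ, k = 2 ^ i) →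
      IsAutomatic k tm ∧
      (∃ i p : ℕ, 1 ≤ p ∧ ∀ j < p, tm (i + j) = tm (i + j + p)) ∧
      (¬ ∃ i p : ℕ, 1 ≤ p ∧ ∀ j ≤ p, tm (i + j) = tm (i + j + p))) := by
  refine ⟨RepThr.exists_word k hk, ?_⟩
  rintro ⟨i, rfl⟩
  refine ⟨?_, ⟨1, 1, le_rfl, ?_⟩, ?_⟩
  · exact RepThr.automatic_of_compat (2 ^ i) hk tm
      (RepThr.compat_pow 2 (by omega) tm RepThr.tm_compat i) id
  · intro j hj
    have : j = 0 := by omega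
    subst this
    simp [tm]
  · rintro ⟨i, p, hp, H⟩
    exact RepThr.tm_overlap_free p i hp H
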